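/- arXiv:1311.1488 — 2 statements merged into one kernel-verified Lean document; each statement's English description precedes it below -/
import Mathlib

section
/- Let ℓ_N = ⌈log₂ N⌉. Then pointwise on the underlying probability space (i.e. for every realization of the jump variables), for every n ≥ 0 one has R^{N,ℓ_N}(n − ℓ_N) ≤ 𝒴_1(n) and R^{N,ℓ_N}(n) ≤ 𝒴_N(n). -/
open MeasureTheory ProbabilityTheory Real Filter Set

noncomputable section

/-- One step of the `N`-BRW: each of the `N` particles branches into two, the children jump
according to `jump`, and only the `N` right-most particles are kept; the result is the
sorted (ascending) vector of the `N` retained positions. -/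
def brwStep (N : ℕ) (pos : Fin N → ℝ) (jump : Fin N → Fin 2 → ℝ) : Fin N → ℝ := fun i =>
  (((Finset.univ : Finset (Fin N × Fin 2)).val.map fun p => pos p.1 + jump p.1 p.2).sort
      (· ≤ ·)).getD (N + i) 0

/-- The `N`-BRW started from the sorted configuration `x0`, driven by the jumps `jump`:
`brw N x0 jump n i` is the position `X_{i+1}(n)` of the `(i+1)`-th lowest particle at time `n`. -/
def brw (N : ℕ) (x0 : Fin N → ℝ) (jump : ℕ → Fin N → Fin 2 → ℝ) : ℕ → Fin N → ℝ
  | 0 => x0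
  | n + 1 => brwStep N (brw N x0 jump n) (jump n)

/-- Position `X_N(n)` of the right-most particle of the `N`-BRW started at the origin. -/
def brwMax (N : ℕ) (jump : ℕ → Fin N → Fin 2 → ℝ) (n : ℕ) : ℝ :=
  ⨆ i, brw N (fun _ => 0) jump n i

/-- Position `X_1(n)` of the left-most particle of the `N`-BRW started at the origin. -/
def brwMin (N : ℕ) (jump : ℕ → Fin N → Fin 2 → ℝ) (n : ℕ) : ℝ :=
  ⨅ i, brw N (fun _ => 0) jump n i

/-- The `(N,ℓ)`-discretised stairs process driven by the jumps `Y`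
(with the convention `R(k) = 0` for `k ≤ 0`, realised via truncated subtraction). -/
def dsp (N ℓ : ℕ) (Y : ℕ → Fin N → Fin 2 → ℝ) : ℕ → ℝ
  | 0 => 0
  | n + 1 => max (dsp N ℓ Y n) (dsp N ℓ Y (n - ℓ) + ⨆ p : Fin N × Fin 2, Y n p.1 p.2)

/-- The tail `P(X > x) = 1/h(x)` of the random variable `X` under `P`. -/
def tail {Ω : Type*} [MeasurableSpace Ω] (P : Measure Ω) (X : Ω → ℝ) (x : ℝ) : ℝ :=
  (P {ω | x < X ω}).toReal

/-- Generalized inverse `h⁻¹(y)` of `h(x) = 1 / P(X > x)`. -/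
def hinv {Ω : Type*} [MeasurableSpace Ω] (P : Measure Ω) (X : Ω → ℝ) (y : ℝ) : ℝ :=
  sInf {x : ℝ | 0 ≤ x ∧ tail P X x ≤ y⁻¹}

/-- The scaling sequence `c_N = h⁻¹(2 N log₂ N)`. -/
def cN {Ω : Type*} [MeasurableSpace Ω] (P : Measure Ω) (X : Ω → ℝ) (N : ℕ) : ℝ :=
  hinv P X (2 * N * Real.logb 2 N)

/-!
Since the jumps are nonnegative, the children of the particles at or above a level `a` are again
at or above `a`. Their number therefore at least doubles at each step until all `N` particles are
at or above `a`, so a level reached by one particle is reached by all of them `ℓ` steps later if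
`N ≤ 2 ^ ℓ`. Inductively, some particle is at or above `R (n - ℓ)` at time `n - ℓ`, hence every
particle is at time `n`, including the parent of the largest jump of generation `n`. The child
making this jump is at or above `R (n - ℓ) + max Y n`, the new candidate value for `R (n + 1)`.
-/

open scoped Finset

lemma min_length_countP_le_countP_of_pairwise_append {α : Type*} [Preorder α] [DecidableLE α]
    {l₁ l₂ : List α} (h : (l₁ ++ l₂).Pairwise (· ≤ ·)) (a : α) :
    min l₂.length ((l₁ ++ l₂).countP (a ≤ ·)) ≤ l₂.countP (a ≤ ·) := by
  by_cases hall : ∀ y ∈ l₂, a ≤ y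
  · have hright : l₂.countP (a ≤ ·) = l₂.length :=
      List.countP_eq_length.mpr (by simpa using hall)
    rw [hright]
    exact min_le_left _ _
  · push Not at hall
    obtain ⟨y, hy, hay⟩ := hall
    have hleft : l₁.countP (a ≤ ·) = 0 := List.countP_eq_zero.mpr fun x hx => by
      simpa using fun hax => hay (hax.trans ((List.pairwise_append.mp h).2.2 x hx y hy))
    rw [List.countP_append, hleft, zero_add]
    exact min_le_right _ _

lemma card_filter_eq_countP_ofFn {α : Type*} {n : ℕ} (f : Fin n → α) (p : α → Prop)
    [DecidablePred p] : #{i | p (f i)} = (List.ofFn f).countP p := by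
  rw [← Multiset.coe_countP, ← Fin.univ_val_map, Multiset.countP_map]
  rfl

lemma forall_of_card_le_card_filter {ι : Type*} [Fintype ι] {p : ι → Prop} [DecidablePred p]
    (h : Fintype.card ι ≤ #{i | p i}) (i : ι) : p i :=
  Finset.filter_card_eq (le_antisymm (Finset.card_le_univ _) h) i (Finset.mem_univ i)

lemma card_filter_mul_card_le_card_filter_add {ι κ M : Type*} [Fintype ι] [Fintype κ]
    [AddZeroClass M] [Preorder M] [AddLeftMono M] [DecidableLE M]
    (x : ι → M) {y : ι → κ → M} (hy : ∀ i j, 0 ≤ y i j) (a : M) :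
    #{i | a ≤ x i} * Fintype.card κ ≤ #{p : ι × κ | a ≤ x p.1 + y p.1 p.2} := by
  rw [← Finset.card_univ, ← Finset.card_product]
  refine Finset.card_le_card fun p hp => ?_
  have hpx : a ≤ x p.1 := by simpa using hp
  simpa using le_add_of_le_of_nonneg hpx (hy p.1 p.2)

section BranchingRandomWalk

variable {N : ℕ}

lemma min_card_children_le_card_brwStep (x : Fin N → ℝ) (y : Fin N → Fin 2 → ℝ) (a : ℝ) :
    min N #{p : Fin N × Fin 2 | a ≤ x p.1 + y p.1 p.2} ≤ #{i | a ≤ brwStep N x y i} := by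
  set children : Multiset ℝ :=
    (Finset.univ : Finset (Fin N × Fin 2)).val.map fun p => x p.1 + y p.1 p.2 with hchildren
  set L := children.sort (· ≤ ·) with hL
  have hlength : L.length = N * 2 := by simp [hL, hchildren]
  have hstep : List.ofFn (brwStep N x y) = L.drop N := by
    refine List.ext_getElem (by simp only [List.length_ofFn, List.length_drop]; omega) ?_
    intro i hi hi'
    rw [List.length_ofFn] at hi
    rw [List.getElem_ofFn, List.getElem_drop]
    exact List.getD_eq_getElem L 0 (by dsimp only; omega)
  have hcount : #{p : Fin N × Fin 2 | a ≤ x p.1 + y p.1 p.2} = L.countP (a ≤ ·) := by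
    rw [← Multiset.coe_countP, hL, Multiset.sort_eq, hchildren, Multiset.countP_map]
    rfl
  have hsplit : (L.take N ++ L.drop N).Pairwise (· ≤ ·) := by
    rw [List.take_append_drop]
    exact Multiset.pairwise_sort children (· ≤ ·)
  have hdrop : (L.drop N).length = N := by rw [List.length_drop]; omega
  rw [card_filter_eq_countP_ofFn _ (a ≤ ·), hstep, hcount]
  simpa only [List.take_append_drop, hdrop] using
    min_length_countP_le_countP_of_pairwise_append hsplit a

lemma min_two_mul_card_le_card_brwStep (x : Fin N → ℝ) {y : Fin N → Fin 2 → ℝ}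
    (hy : ∀ i j, 0 ≤ y i j) (a : ℝ) :
    min N (2 * #{i | a ≤ x i}) ≤ #{i | a ≤ brwStep N x y i} := by
  have hchildren := card_filter_mul_card_le_card_filter_add x hy a
  rw [Fintype.card_fin, mul_comm] at hchildren
  exact (min_le_min_left N hchildren).trans (min_card_children_le_card_brwStep x y a)

lemma exists_le_brwStep {x : Fin N → ℝ} {y : Fin N → Fin 2 → ℝ} {a : ℝ} (p : Fin N × Fin 2)
    (hp : a ≤ x p.1 + y p.1 p.2) : ∃ i, a ≤ brwStep N x y i := by
  have hchild : 0 < #{p : Fin N × Fin 2 | a ≤ x p.1 + y p.1 p.2} :=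
    Finset.card_pos.mpr ⟨p, by simpa using hp⟩
  have hcard := (lt_min p.1.pos hchild).trans_le (min_card_children_le_card_brwStep x y a)
  obtain ⟨i, hi⟩ := Finset.card_pos.mp hcard
  exact ⟨i, (Finset.mem_filter.mp hi).2⟩

variable {x₀ : Fin N → ℝ} {Y : ℕ → Fin N → Fin 2 → ℝ}

lemma min_two_pow_mul_card_le_card_brw_add (hY : ∀ n i j, 0 ≤ Y n i j) (a : ℝ) (n m : ℕ) :
    min N (2 ^ m * #{i | a ≤ brw N x₀ Y n i}) ≤ #{i | a ≤ brw N x₀ Y (n + m) i} := by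
  induction m with
  | zero => simp
  | succ m ih =>
    have hstep : _ ≤ #{i | a ≤ brw N x₀ Y (n + (m + 1)) i} :=
      min_two_mul_card_le_card_brwStep (brw N x₀ Y (n + m)) (hY (n + m)) a
    rw [pow_succ', mul_assoc]
    omega

lemma le_brw_add_of_le_brw {ℓ : ℕ} (hℓ : N ≤ 2 ^ ℓ) (hY : ∀ n i j, 0 ≤ Y n i j) {a : ℝ} {n : ℕ}
    {i : Fin N} (hi : a ≤ brw N x₀ Y n i) (j : Fin N) : a ≤ brw N x₀ Y (n + ℓ) j := by
  have hpos : 0 < #{i | a ≤ brw N x₀ Y n i} := Finset.card_pos.mpr ⟨i, by simpa using hi⟩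
  have hall : N ≤ #{i | a ≤ brw N x₀ Y (n + ℓ) i} :=
    (le_min le_rfl (hℓ.trans (Nat.le_mul_of_pos_right _ hpos))).trans
      (min_two_pow_mul_card_le_card_brw_add hY a n ℓ)
  exact forall_of_card_le_card_filter ((Fintype.card_fin N).trans_le hall) j

lemma brw_nonneg (hx₀ : ∀ i, 0 ≤ x₀ i) (hY : ∀ n i j, 0 ≤ Y n i j) (n : ℕ) (i : Fin N) :
    0 ≤ brw N x₀ Y n i := by
  have hzero : #{i | 0 ≤ brw N x₀ Y 0 i} = N := by simp [brw, hx₀]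
  have hcard := min_two_pow_mul_card_le_card_brw_add (x₀ := x₀) hY 0 0 n
  rw [hzero, zero_add, min_eq_left (Nat.le_mul_of_pos_left N (by positivity))] at hcard
  exact forall_of_card_le_card_filter ((Fintype.card_fin N).trans_le hcard) i

lemma dsp_sub_le_brw {ℓ : ℕ} (hℓ : N ≤ 2 ^ ℓ) (hx₀ : ∀ i, 0 ≤ x₀ i)
    (hY : ∀ n i j, 0 ≤ Y n i j) {n : ℕ}
    (h : ∃ i, dsp N ℓ Y (n - ℓ) ≤ brw N x₀ Y (n - ℓ) i) (j : Fin N) :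
    dsp N ℓ Y (n - ℓ) ≤ brw N x₀ Y n j := by
  rcases le_total n ℓ with hn | hn
  · rw [Nat.sub_eq_zero_of_le hn, dsp]
    exact brw_nonneg hx₀ hY n j
  · obtain ⟨i, hi⟩ := h
    simpa only [Nat.sub_add_cancel hn] using le_brw_add_of_le_brw hℓ hY hi j

lemma exists_dsp_le_brw [NeZero N] {ℓ : ℕ} (hℓ : N ≤ 2 ^ ℓ) (hx₀ : ∀ i, 0 ≤ x₀ i)
    (hY : ∀ n i j, 0 ≤ Y n i j) (n : ℕ) : ∃ i, dsp N ℓ Y n ≤ brw N x₀ Y n i := by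
  induction n using Nat.strong_induction_on with
  | _ n ih =>
    rcases n with _ | n
    · exact ⟨0, by simpa only [dsp, brw] using hx₀ 0⟩
    rw [dsp]
    rcases max_choice (dsp N ℓ Y n) (dsp N ℓ Y (n - ℓ) + ⨆ p : Fin N × Fin 2, Y n p.1 p.2)
      with hmax | hmax <;> rw [hmax]
    · obtain ⟨i, hi⟩ := ih n n.lt_succ_self
      exact exists_le_brwStep (i, 0) (le_add_of_le_of_nonneg hi (hY n i 0))
    · obtain ⟨p, hp⟩ := exists_eq_ciSup_of_finite (f := fun p : Fin N × Fin 2 => Y n p.1 p.2)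
      have hparent : dsp N ℓ Y (n - ℓ) ≤ brw N x₀ Y n p.1 :=
        dsp_sub_le_brw hℓ hx₀ hY (ih (n - ℓ) (Nat.lt_succ_of_le (n.sub_le ℓ))) p.1
      rw [← hp]
      exact exists_le_brwStep p (by gcongr)

end BranchingRandomWalk

lemma hinv_nonneg {Ω : Type*} [MeasurableSpace Ω] (P : Measure Ω) (X : Ω → ℝ) (y : ℝ) :
    0 ≤ hinv P X y :=
  Real.sInf_nonneg fun _ hx => hx.1

theorem stmt_0_general {N ℓ : ℕ} [NeZero N] (hℓ : N ≤ 2 ^ ℓ) {Y : ℕ → Fin N → Fin 2 → ℝ}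
    (hY : ∀ n i j, 0 ≤ Y n i j) (n : ℕ) :
    dsp N ℓ Y (n - ℓ) ≤ brwMin N Y n ∧ dsp N ℓ Y n ≤ brwMax N Y n := by
  have hmax (m : ℕ) : ∃ i, dsp N ℓ Y m ≤ brw N (fun _ => 0) Y m i :=
    exists_dsp_le_brw hℓ (fun _ => le_rfl) hY m
  constructor
  · exact le_ciInf (dsp_sub_le_brw hℓ (fun _ => le_rfl) hY (hmax (n - ℓ)))
  · obtain ⟨i, hi⟩ := hmax n
    exact hi.trans (le_ciSup (Set.finite_range (brw N (fun _ => 0) Y n)).bddAbove i)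

/-- Proposition "lower bound": with `ℓ_N = ⌈log₂ N⌉`, for every realization of
the jump variables and every `n ≥ 0`, `R^{N,ℓ_N}(n − ℓ_N) ≤ 𝒴_1(n)` and `R^{N,ℓ_N}(n) ≤ 𝒴_N(n)`,
where `𝒴_i(n) = X_i(n)/c_N` is the rescaled `N`-BRW and `R^{N,ℓ_N}` is the discretised stairs
process driven by the rescaled jumps `Y_{n,i} = X_{n,i}/c_N`. -/
theorem stmt_0 {Ω : Type*} [MeasurableSpace Ω] (P : Measure Ω) [IsProbabilityMeasure P]
    (X : Ω → ℝ) (hXmeas : Measurable X) (hXpos : ∀ ω, 0 ≤ X ω)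
    (α : ℝ) (hα : 0 < α)
    (hRV : ∀ l : ℝ, 0 < l →
      Tendsto (fun x => tail P X x / tail P X (l * x)) atTop (nhds (l ^ α)))
    (N : ℕ) (hN : 1 ≤ N)
    (ξ : ℕ → Fin N → Fin 2 → Ω → ℝ)
    (hξmeas : ∀ n i j, Measurable (ξ n i j))
    (hξpos : ∀ n i j ω, 0 ≤ ξ n i j ω)
    (hξdist : ∀ n i j, Measure.map (ξ n i j) P = Measure.map X P)
    (hξindep : iIndepFun
      (fun p : ℕ × Fin N × Fin 2 => ξ p.1 p.2.1 p.2.2) P)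
    (ω : Ω) (n : ℕ) :
    dsp N (Nat.clog 2 N) (fun k i j => ξ k i j ω / cN P X N) (n - Nat.clog 2 N) ≤
        brwMin N (fun k i j => ξ k i j ω / cN P X N) n ∧
      dsp N (Nat.clog 2 N) (fun k i j => ξ k i j ω / cN P X N) n ≤
        brwMax N (fun k i j => ξ k i j ω / cN P X N) n := by
  have : NeZero N := ⟨Nat.one_le_iff_ne_zero.mp hN⟩
  exact stmt_0_general (Nat.le_pow_clog one_lt_two N)
    (fun k i j => div_nonneg (hξpos k i j ω) (hinv_nonneg P X _)) n

end
end

section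
/- For every ε > 0 there exists N₀ such that for all N ≥ N₀, all integers m with (1/2)·log₂ N ≤ m ≤ 2·log₂ N, all real x ≥ m^{max(1, 1/α) + ε}/c_N and all n ≥ 0, one has almost surely P( θ^{(m)}_{n+1} − θ^{(m)}_n > x | F_{n−m} ) ≤ N · m · 2^{m+1} / h(c_N x)². -/
open MeasureTheory ProbabilityTheory Real Filter Set

noncomputable section

/-- The σ-algebra `F_n` generated by the jump variables `ξ k i j`, `0 ≤ k ≤ n-1`
(the trivial σ-algebra for `n = 0`). -/
def brwFilt {Ω : Type*} [MeasurableSpace Ω] (N : ℕ) (ξ : ℕ → Fin N → Fin 2 → Ω → ℝ) (n : ℕ) :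
    MeasurableSpace Ω :=
  ⨆ (k : ℕ) (_ : k < n) (i : Fin N) (j : Fin 2), MeasurableSpace.comap (ξ k i j) inferInstance

/-- `θ^{(m)}_n = max_{0 ≤ k ≤ n} (𝒴_N(k) − R^{N,m}(k))`. -/
def theta (N m : ℕ) (Y : ℕ → Fin N → Fin 2 → ℝ) (n : ℕ) : ℝ :=
  (Finset.range (n + 1)).sup' Finset.nonempty_range_add_one fun k => brwMax N Y k - dsp N m Y k

/-! If the scaled increment exceeds `x`, put `z = c_N x`. At time `n + 1` a new front is created by
a jump larger than `z`, and the parent of that particle lies more than `z` ahead of the front at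
time `n - m`; otherwise the stairs process, which either ignores the jump or adds it to its value at
time `n - m`, would have kept up. The jump is independent of the past and costs `1 / h(z)`. For the
parent, cap `exp (l y)` at the level `z` and sum it over the population, with `y` the distance to
the front at time `n - m`: branching doubles this sum in each step, and a new jump multiplies it by
an exponential moment truncated at `u = z / K`, up to an error of order `exp (l z) / h(u)`. Over `m`
steps, with `l` of order `log z / z`, the truncated moments contribute a bounded factor as soon as
`m ≤ z ^ β` with `β < min 1 α`, and Potter-type bounds show that `exp (-l z) + 2 / h(u)` is at most
a constant multiple of `1 / h(z)`. The constant is absorbed by the factor `m`. -/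

open Asymptotics
open scoped ENNReal Topology

section Deterministic

variable {N : ℕ}

/-- The positions of the `2N` children of a configuration, before selection. -/
def childPos (pos : Fin N → ℝ) (jump : Fin N → Fin 2 → ℝ) (p : Fin N × Fin 2) : ℝ :=
  pos p.1 + jump p.1 p.2

lemma exists_equiv_monotone_childPos_comp (pos : Fin N → ℝ) (jump : Fin N → Fin 2 → ℝ) :
    ∃ e : Fin (N * 2) ≃ Fin N × Fin 2, Monotone (childPos pos jump ∘ e) :=
  ⟨(Tuple.sort (childPos pos jump ∘ finProdFinEquiv.symm)).trans finProdFinEquiv.symm,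
    Tuple.monotone_sort (childPos pos jump ∘ finProdFinEquiv.symm)⟩

lemma sort_map_univ_eq_ofFn {ι : Type*} [Fintype ι] {n : ℕ} (v : ι → ℝ) (e : Fin n ≃ ι)
    (he : Monotone (v ∘ e)) :
    ((Finset.univ : Finset ι).val.map v).sort (· ≤ ·) = List.ofFn (v ∘ e) := by
  refine List.Perm.eq_of_pairwise' (Multiset.pairwise_sort _ _) he.sortedLE_ofFn.pairwise ?_
  rw [← Multiset.coe_eq_coe, Multiset.sort_eq, ← Fin.univ_val_map, ← Multiset.map_map,
    Multiset.map_univ_val_equiv]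

lemma brwStep_eq_of_monotone {pos : Fin N → ℝ} {jump : Fin N → Fin 2 → ℝ}
    (e : Fin (N * 2) ≃ Fin N × Fin 2) (he : Monotone (childPos pos jump ∘ e)) (i : Fin N) :
    brwStep N pos jump i = childPos pos jump (e ⟨N + i, by omega⟩) := by
  have hsort := sort_map_univ_eq_ofFn _ e he
  unfold childPos at hsort ⊢
  rw [brwStep, hsort, List.getD_eq_getElem _ _ (by simp only [List.length_ofFn]; omega)]
  simp only [List.getElem_ofFn, Function.comp_apply]

lemma exists_brwStep_eq_childPos (pos : Fin N → ℝ) (jump : Fin N → Fin 2 → ℝ) (i : Fin N) :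
    ∃ p, brwStep N pos jump i = childPos pos jump p := by
  obtain ⟨e, he⟩ := exists_equiv_monotone_childPos_comp pos jump
  exact ⟨_, brwStep_eq_of_monotone e he i⟩

lemma sum_brwStep_le_sum_childPos (pos : Fin N → ℝ) (jump : Fin N → Fin 2 → ℝ) (f : ℝ → ℝ≥0∞) :
    ∑ i, f (brwStep N pos jump i) ≤ ∑ p, f (childPos pos jump p) := by
  obtain ⟨e, he⟩ := exists_equiv_monotone_childPos_comp pos jump
  let retained : Fin N ↪ Fin N × Fin 2 :=
    ⟨fun i => e ⟨N + i, by omega⟩, fun i j hij => by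
      simpa [Fin.ext_iff] using e.injective hij⟩
  calc ∑ i, f (brwStep N pos jump i)
      = ∑ p ∈ Finset.univ.map retained, f (childPos pos jump p) := by
        rw [Finset.sum_map]
        exact Finset.sum_congr rfl fun i _ => congrArg f (brwStep_eq_of_monotone e he i)
    _ ≤ ∑ p, f (childPos pos jump p) := Finset.sum_le_sum_of_subset (Finset.subset_univ _)

lemma brwStep_div (pos : Fin N → ℝ) (jump : Fin N → Fin 2 → ℝ) {c : ℝ} (hc : 0 ≤ c) (i : Fin N) :
    brwStep N (fun i => pos i / c) (fun i j => jump i j / c) i = brwStep N pos jump i / c := by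
  obtain ⟨e, he⟩ := exists_equiv_monotone_childPos_comp pos jump
  have hdiv : childPos (fun i => pos i / c) (fun i j => jump i j / c) =
      fun p => childPos pos jump p / c := funext fun p => (add_div _ _ _).symm
  have he_div : Monotone (childPos (fun i => pos i / c) (fun i j => jump i j / c) ∘ e) := by
    rw [hdiv]
    exact fun a b hab => div_le_div_of_nonneg_right (he hab) hc
  rw [brwStep_eq_of_monotone e he, brwStep_eq_of_monotone e he_div, hdiv]

lemma brw_div (x0 : Fin N → ℝ) (Y : ℕ → Fin N → Fin 2 → ℝ) {c : ℝ} (hc : 0 ≤ c) (n : ℕ) :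
    brw N (fun i => x0 i / c) (fun k i j => Y k i j / c) n = fun i => brw N x0 Y n i / c := by
  induction n with
  | zero => rfl
  | succ n ih =>
    funext i
    rw [brw, ih, brwStep_div _ _ hc, brw]

lemma iSup_div_of_nonneg {ι : Sort*} (f : ι → ℝ) {c : ℝ} (hc : 0 ≤ c) :
    ⨆ i, f i / c = (⨆ i, f i) / c := by
  simp only [div_eq_mul_inv, Real.iSup_mul_of_nonneg (inv_nonneg.2 hc)]

lemma brwMax_div (Y : ℕ → Fin N → Fin 2 → ℝ) {c : ℝ} (hc : 0 ≤ c) (n : ℕ) :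
    brwMax N (fun k i j => Y k i j / c) n = brwMax N Y n / c := by
  have hbrw := brw_div (fun _ => 0) Y hc n
  simp only [zero_div] at hbrw
  rw [brwMax, hbrw, iSup_div_of_nonneg _ hc, brwMax]

lemma dsp_div (ℓ : ℕ) (Y : ℕ → Fin N → Fin 2 → ℝ) {c : ℝ} (hc : 0 ≤ c) (n : ℕ) :
    dsp N ℓ (fun k i j => Y k i j / c) n = dsp N ℓ Y n / c := by
  induction n using Nat.strong_induction_on with
  | h n ih =>
    cases n with
    | zero => simp only [dsp, zero_div]
    | succ n =>
      rw [dsp, dsp, ih n n.lt_succ_self, ih (n - ℓ) (by omega), iSup_div_of_nonneg _ hc, ← add_div,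
        max_div_div_right hc]

lemma theta_div (m : ℕ) (Y : ℕ → Fin N → Fin 2 → ℝ) {c : ℝ} (hc : 0 ≤ c) (n : ℕ) :
    theta N m (fun k i j => Y k i j / c) n = theta N m Y n / c := by
  simp only [theta, brwMax_div Y hc, dsp_div m Y hc, ← sub_div, Finset.sup'_div₀ hc]

lemma brw_le_brwMax (Y : ℕ → Fin N → Fin 2 → ℝ) (n : ℕ) (i : Fin N) :
    brw N (fun _ => 0) Y n i ≤ brwMax N Y n :=
  le_ciSup (f := brw N (fun _ => 0) Y n) (finite_range _).bddAbove i

lemma brwMax_sub_dsp_le_theta (m : ℕ) (Y : ℕ → Fin N → Fin 2 → ℝ) {k n : ℕ} (hk : k ≤ n) :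
    brwMax N Y k - dsp N m Y k ≤ theta N m Y n :=
  Finset.le_sup' (fun k => brwMax N Y k - dsp N m Y k) (Finset.mem_range_succ_iff.2 hk)

lemma theta_succ (m : ℕ) (Y : ℕ → Fin N → Fin 2 → ℝ) (n : ℕ) :
    theta N m Y (n + 1) = max (theta N m Y n) (brwMax N Y (n + 1) - dsp N m Y (n + 1)) := by
  refine le_antisymm (Finset.sup'_le _ _ fun k hk => ?_) (max_le ?_ ?_)
  · rcases Nat.le_succ_iff.1 (Finset.mem_range_succ_iff.1 hk) with hk | rfl
    · exact le_max_of_le_left (brwMax_sub_dsp_le_theta m Y hk)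
    · exact le_max_right _ _
  · exact Finset.sup'_le _ _ fun k hk =>
      brwMax_sub_dsp_le_theta m Y (Finset.mem_range_succ_iff.1 hk |>.trans n.le_succ)
  · exact brwMax_sub_dsp_le_theta m Y le_rfl

/-- How far the `i`-th particle at time `n` lies ahead of the front of the process at time `s`. -/
def lead (Y : ℕ → Fin N → Fin 2 → ℝ) (s n : ℕ) (i : Fin N) : ℝ :=
  brw N (fun _ => 0) Y n i - brwMax N Y s

lemma lead_self_nonpos (Y : ℕ → Fin N → Fin 2 → ℝ) (s : ℕ) (i : Fin N) : lead Y s s i ≤ 0 :=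
  sub_nonpos.2 (brw_le_brwMax Y s i)

lemma sum_lead_succ_le (Y : ℕ → Fin N → Fin 2 → ℝ) (s n : ℕ) (f : ℝ → ℝ≥0∞) :
    ∑ i, f (lead Y s (n + 1) i) ≤ ∑ p : Fin N × Fin 2, f (lead Y s n p.1 + Y n p.1 p.2) := by
  refine (sum_brwStep_le_sum_childPos _ (Y n) fun y => f (y - brwMax N Y s)).trans_eq ?_
  simp only [childPos, lead, add_sub_right_comm]

-- Let the front at time `n + 1` be a child of the particle `i` through the jump `Y n i b`.
-- The stairs process satisfies `R (n + 1) ≥ R n` and `R (n + 1) ≥ R (n - m) + Y n i b`; comparing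
-- `θ n` with its value at time `n`, resp. `n - m`, yields the second, resp. the first, claim.
lemma exists_lt_lead_and_lt_jump_of_lt_theta_increment (hN : 0 < N) {m n : ℕ}
    {Y : ℕ → Fin N → Fin 2 → ℝ} {z : ℝ} (hz : 0 ≤ z)
    (h : z < theta N m Y (n + 1) - theta N m Y n) :
    ∃ p : Fin N × Fin 2, z < lead Y (n - m) n p.1 ∧ z < Y n p.1 p.2 := by
  have : Nonempty (Fin N) := ⟨⟨0, hN⟩⟩
  have hgap : theta N m Y n + z < brwMax N Y (n + 1) - dsp N m Y (n + 1) := by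
    rcases lt_max_iff.1 ((lt_sub_iff_add_lt'.1 h).trans_eq (theta_succ m Y n)) with h' | h'
    · linarith
    · exact h'
  obtain ⟨i, hi⟩ : ∃ i, brw N (fun _ => 0) Y (n + 1) i = brwMax N Y (n + 1) :=
    exists_eq_ciSup_of_finite
  obtain ⟨p, hp⟩ := exists_brwStep_eq_childPos (brw N (fun _ => 0) Y n) (Y n) i
  have hfront : brwMax N Y (n + 1) = brw N (fun _ => 0) Y n p.1 + Y n p.1 p.2 := hi.symm.trans hp
  have hjump : Y n p.1 p.2 ≤ ⨆ q : Fin N × Fin 2, Y n q.1 q.2 :=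
    le_ciSup (f := fun q : Fin N × Fin 2 => Y n q.1 q.2) (finite_range _).bddAbove p
  have hdsp : dsp N m Y (n + 1) =
      max (dsp N m Y n) (dsp N m Y (n - m) + ⨆ q : Fin N × Fin 2, Y n q.1 q.2) := by
    rw [dsp]
  have hdsp_old : dsp N m Y n ≤ dsp N m Y (n + 1) := hdsp ▸ le_max_left _ _
  have hdsp_new : dsp N m Y (n - m) + ⨆ q : Fin N × Fin 2, Y n q.1 q.2 ≤ dsp N m Y (n + 1) :=
    hdsp ▸ le_max_right _ _
  have htheta_n := brwMax_sub_dsp_le_theta m Y (le_refl n)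
  have htheta_delay := brwMax_sub_dsp_le_theta m Y (Nat.sub_le n m)
  have hparent := brw_le_brwMax Y n p.1
  exact ⟨p, by rw [lead]; linarith, by linarith⟩

end Deterministic

section Measurability

variable {Ω : Type*} {N : ℕ}

lemma measurable_brwStep {_ : MeasurableSpace Ω} {pos : Ω → Fin N → ℝ}
    {jump : Ω → Fin N → Fin 2 → ℝ} (hpos : ∀ i, Measurable fun ω => pos ω i)
    (hjump : ∀ i j, Measurable fun ω => jump ω i j) (i : Fin N) :
    Measurable fun ω => brwStep N (pos ω) (jump ω) i := by
  have hchild (p) : Measurable fun ω => childPos (pos ω) (jump ω) p :=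
    (hpos p.1).add (hjump p.1 p.2)
  intro S hS
  have hcover : (fun ω => brwStep N (pos ω) (jump ω) i) ⁻¹' S =
      ⋃ e : Fin (N * 2) ≃ Fin N × Fin 2, {ω | Monotone (childPos (pos ω) (jump ω) ∘ e)} ∩
        (fun ω => childPos (pos ω) (jump ω) (e ⟨N + i, by omega⟩)) ⁻¹' S := by
    ext ω
    simp only [mem_preimage, mem_iUnion, mem_inter_iff, mem_ofPred_eq]
    constructor
    · intro hω
      obtain ⟨e, he⟩ := exists_equiv_monotone_childPos_comp (pos ω) (jump ω)
      exact ⟨e, he, brwStep_eq_of_monotone e he i ▸ hω⟩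
    · rintro ⟨e, he, hω⟩
      exact brwStep_eq_of_monotone e he i ▸ hω
  rw [hcover]
  refine MeasurableSet.iUnion fun e => MeasurableSet.inter ?_ (hchild _ hS)
  simp only [Monotone, ofPred_forall]
  exact .iInter fun a => .iInter fun b => .iInter fun _ => measurableSet_le (hchild _) (hchild _)

variable {_ : MeasurableSpace Ω} {ξ : ℕ → Fin N → Fin 2 → Ω → ℝ} {n : ℕ}

lemma measurable_brw (hξ : ∀ k < n, ∀ i j, Measurable (ξ k i j)) (i : Fin N) :
    Measurable fun ω => brw N (fun _ => 0) (fun k i j => ξ k i j ω) n i := by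
  induction n generalizing i with
  | zero => exact measurable_const
  | succ n ih => exact measurable_brwStep (ih fun k hk => hξ k (by omega)) (hξ n n.lt_succ_self) i

lemma measurable_brwMax (hξ : ∀ k < n, ∀ i j, Measurable (ξ k i j)) :
    Measurable fun ω => brwMax N (fun k i j => ξ k i j ω) n :=
  .iSup fun i => measurable_brw hξ i

lemma measurable_dsp (ℓ : ℕ) (hξ : ∀ k < n, ∀ i j, Measurable (ξ k i j)) :
    Measurable fun ω => dsp N ℓ (fun k i j => ξ k i j ω) n := by
  induction n using Nat.strong_induction_on with
  | h n ih =>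
    cases n with
    | zero => simp only [dsp, measurable_const]
    | succ n =>
      simp only [dsp]
      exact (ih n (by omega) fun k hk => hξ k (by omega)).max <|
        (ih (n - ℓ) (by omega) fun k hk => hξ k (by omega)).add <|
          .iSup fun p => hξ n n.lt_succ_self p.1 p.2

lemma measurable_theta (m : ℕ) (hξ : ∀ k < n, ∀ i j, Measurable (ξ k i j)) :
    Measurable fun ω => theta N m (fun k i j => ξ k i j ω) n := by
  simp only [theta]
  exact Finset.measurable_range_sup'' fun k hk =>
    (measurable_brwMax fun k' hk' => hξ k' (by omega)).sub
      (measurable_dsp m fun k' hk' => hξ k' (by omega))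

lemma measurable_lead {s : ℕ} (hs : s ≤ n) (hξ : ∀ k < n, ∀ i j, Measurable (ξ k i j))
    (i : Fin N) : Measurable fun ω => lead (fun k i j => ξ k i j ω) s n i :=
  (measurable_brw hξ i).sub (measurable_brwMax fun k hk => hξ k (by omega))

end Measurability

section Filtration

variable {Ω : Type*} [MeasurableSpace Ω] {N : ℕ} (ξ : ℕ → Fin N → Fin 2 → Ω → ℝ)

variable {ξ} in
lemma brwFilt_le (hξ : ∀ k i j, Measurable (ξ k i j)) (n : ℕ) :
    brwFilt N ξ n ≤ ‹MeasurableSpace Ω› :=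
  iSup_le fun k => iSup_le fun _ => iSup_le fun i => iSup_le fun j => (hξ k i j).comap_le

lemma brwFilt_mono : Monotone (brwFilt N ξ) := fun _ _ h =>
  iSup_mono fun _ => iSup_le fun hk => le_iSup_of_le (hk.trans_le h) le_rfl

lemma measurable_brwFilt_jump {k n : ℕ} (h : k < n) (i : Fin N) (j : Fin 2) :
    Measurable[brwFilt N ξ n] (ξ k i j) :=
  Measurable.of_comap_le <| le_iSup_of_le k <| le_iSup_of_le h <| le_iSup_of_le i <|
    le_iSup_of_le j le_rfl

/-- The jumps `ξ k i j` form an i.i.d. family of random variables with common law `μ`. -/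
structure IsIIDJumps (P : Measure Ω) (μ : Measure ℝ) (ξ : ℕ → Fin N → Fin 2 → Ω → ℝ) : Prop where
  measurable : ∀ k i j, Measurable (ξ k i j)
  map_eq : ∀ k i j, P.map (ξ k i j) = μ
  indep : iIndepFun (fun p : ℕ × Fin N × Fin 2 => ξ p.1 p.2.1 p.2.2) P

variable {P : Measure Ω} {μ : Measure ℝ} {ξ}

lemma IsIIDJumps.indep_brwFilt (hξ : IsIIDJumps P μ ξ) (n : ℕ) (i : Fin N) (j : Fin 2) :
    Indep (brwFilt N ξ n) (MeasurableSpace.comap (ξ n i j) inferInstance) P := by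
  have hdisj := indep_iSup_of_disjoint
    (m := fun p : ℕ × Fin N × Fin 2 => MeasurableSpace.comap (ξ p.1 p.2.1 p.2.2) inferInstance)
    (S := {p | p.1 < n}) (T := {(n, i, j)}) (μ := P)
    (fun p => (hξ.measurable _ _ _).comap_le) hξ.indep (by simp)
  refine indep_of_indep_of_le_left (indep_of_indep_of_le_right hdisj ?_) ?_
  · exact le_iSup_of_le (n, i, j) (le_iSup_of_le rfl le_rfl)
  · exact iSup_le fun k => iSup_le fun hk => iSup_le fun i => iSup_le fun j =>
      le_iSup_of_le (k, i, j) (le_iSup_of_le hk le_rfl)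

lemma IsIIDJumps.setLIntegral_mul_jump (hξ : IsIIDJumps P μ ξ) (n : ℕ) (i : Fin N) (j : Fin 2)
    {A : Set Ω} (hA : MeasurableSet[brwFilt N ξ n] A) {f : Ω → ℝ≥0∞}
    (hf : Measurable[brwFilt N ξ n] f) {φ : ℝ → ℝ≥0∞} (hφ : Measurable φ) :
    ∫⁻ ω in A, f ω * φ (ξ n i j ω) ∂P = (∫⁻ ω in A, f ω ∂P) * ∫⁻ y, φ y ∂μ := by
  have hle := brwFilt_le hξ.measurable n
  have hmul := lintegral_mul_eq_lintegral_mul_lintegral_of_independent_measurableSpace hle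
    (hξ.measurable n i j).comap_le (hξ.indep_brwFilt n i j) (hf.indicator hA)
    (hφ.comp (comap_measurable (ξ n i j)))
  rw [← hξ.map_eq n i j, lintegral_map hφ (hξ.measurable n i j),
    ← lintegral_indicator (hle _ hA), ← lintegral_indicator (hle _ hA)]
  simpa only [indicator_mul_left, Function.comp_apply] using hmul

lemma IsIIDJumps.measure_inter_lt_jump (hξ : IsIIDJumps P μ ξ) {n : ℕ} {B : Set Ω}
    (hB : MeasurableSet[brwFilt N ξ n] B) (i : Fin N) (j : Fin 2) (z : ℝ) :
    P (B ∩ {ω | z < ξ n i j ω}) = P B * μ (Ioi z) := by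
  rw [← hξ.map_eq n i j, Measure.map_apply (hξ.measurable n i j) measurableSet_Ioi]
  exact (Indep_iff _ _ _).1 (hξ.indep_brwFilt n i j) B _ hB ⟨Ioi z, measurableSet_Ioi, rfl⟩

lemma IsIIDJumps.setLIntegral_lead_add_jump_le (hξ : IsIIDJumps P μ ξ) {s n : ℕ} (hs : s ≤ n)
    {A : Set Ω} (hA : MeasurableSet[brwFilt N ξ n] A) {Φ W V : ℝ → ℝ≥0∞} (hΦ : Measurable Φ)
    (hW : Measurable W) (hV : Measurable V) (hle : ∀ x y, Φ (x + y) ≤ Φ x * W y + V y)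
    (i : Fin N) (j : Fin 2) :
    ∫⁻ ω in A, Φ (lead (fun k i j => ξ k i j ω) s n i + ξ n i j ω) ∂P ≤
      (∫⁻ y, W y ∂μ) * (∫⁻ ω in A, Φ (lead (fun k i j => ξ k i j ω) s n i) ∂P) +
        (∫⁻ y, V y ∂μ) * P A := by
  have hlead : Measurable[brwFilt N ξ n] fun ω => Φ (lead (fun k i j => ξ k i j ω) s n i) :=
    hΦ.comp (measurable_lead hs (fun _ hk => measurable_brwFilt_jump ξ hk) i)
  have hVξ : Measurable fun ω => V (ξ n i j ω) := hV.comp (hξ.measurable n i j)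
  have hW_int := hξ.setLIntegral_mul_jump n i j hA hlead hW
  have hV_int := hξ.setLIntegral_mul_jump n i j hA (f := fun _ => 1)
    (@measurable_const _ _ _ (brwFilt N ξ n) _) hV
  simp only [one_mul, setLIntegral_one] at hV_int
  refine (lintegral_mono fun ω => hle _ _).trans_eq ?_
  rw [lintegral_add_right _ hVξ, hW_int, hV_int, mul_comm, mul_comm (P A)]

lemma IsIIDJumps.setLIntegral_sum_lead_succ_le (hξ : IsIIDJumps P μ ξ) {s n : ℕ} (hs : s ≤ n)
    {A : Set Ω} (hA : MeasurableSet[brwFilt N ξ n] A) {Φ W V : ℝ → ℝ≥0∞} (hΦ : Measurable Φ)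
    (hW : Measurable W) (hV : Measurable V) (hle : ∀ x y, Φ (x + y) ≤ Φ x * W y + V y) :
    ∫⁻ ω in A, ∑ i, Φ (lead (fun k i j => ξ k i j ω) s (n + 1) i) ∂P ≤
      2 * (∫⁻ y, W y ∂μ) * (∫⁻ ω in A, ∑ i, Φ (lead (fun k i j => ξ k i j ω) s n i) ∂P) +
        2 * N * (∫⁻ y, V y ∂μ) * P A := by
  have hlead (i) : Measurable fun ω => lead (fun k i j => ξ k i j ω) s n i :=
    measurable_lead hs (fun k _ => hξ.measurable k) i
  have hΦlead (i) : Measurable fun ω => Φ (lead (fun k i j => ξ k i j ω) s n i) :=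
    hΦ.comp (hlead i)
  have hΦchild (p : Fin N × Fin 2) :
      Measurable fun ω => Φ (lead (fun k i j => ξ k i j ω) s n p.1 + ξ n p.1 p.2 ω) :=
    hΦ.comp ((hlead p.1).add (hξ.measurable n p.1 p.2))
  calc _ ≤ ∑ p : Fin N × Fin 2,
          ∫⁻ ω in A, Φ (lead (fun k i j => ξ k i j ω) s n p.1 + ξ n p.1 p.2 ω) ∂P := by
        rw [← lintegral_finsetSum _ fun p _ => hΦchild p]
        exact lintegral_mono fun ω => sum_lead_succ_le _ s n Φ
    _ ≤ _ := Finset.sum_le_sum fun p _ =>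
        hξ.setLIntegral_lead_add_jump_le hs hA hΦ hW hV hle p.1 p.2
    _ = _ := by
        rw [lintegral_finsetSum _ fun i _ => hΦlead i, Fintype.sum_prod_type]
        simp only [Finset.sum_const, Finset.card_univ, Fintype.card_fin, nsmul_eq_mul,
          Finset.sum_add_distrib, ← Finset.mul_sum]
        push_cast
        ring

end Filtration

lemma add_le_pow_mul_add_of_succ_le {a : ℕ → ℝ≥0∞} {q b : ℝ≥0∞} (hq : 2 ≤ q)
    (ha : ∀ r, a (r + 1) ≤ q * a r + b) (r : ℕ) : a r + b ≤ q ^ r * (a 0 + b) := by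
  induction r with
  | zero => rw [pow_zero, one_mul]
  | succ r ih =>
    calc a (r + 1) + b ≤ q * a r + b + b := by gcongr; exact ha r
      _ = q * a r + 2 * b := by rw [two_mul, add_assoc]
      _ ≤ q * (a r + b) := by rw [mul_add]; gcongr
      _ ≤ q ^ (r + 1) * (a 0 + b) := by rw [pow_succ', mul_assoc]; gcongr

section ExponentialMoments

/-- The potential of a particle with lead `y`: an exponential capped at the level `z`. -/
def cappedExp (l z y : ℝ) : ℝ≥0∞ := ENNReal.ofReal (exp (l * min y z))

/-- The exponential of a jump `y`, where jumps outside `[0, u]` count as `0`. -/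
def truncExp (l u y : ℝ) : ℝ≥0∞ := ENNReal.ofReal (exp (l * (Icc 0 u).indicator id y))

/-- The exponential moment of the law `μ` truncated to `[0, u]`. -/
def truncMGF (μ : Measure ℝ) (l u : ℝ) : ℝ≥0∞ := ∫⁻ y, truncExp l u y ∂μ

@[fun_prop]
lemma measurable_cappedExp (l z : ℝ) : Measurable (cappedExp l z) := by
  unfold cappedExp; fun_prop

@[fun_prop]
lemma measurable_truncExp (l u : ℝ) : Measurable (truncExp l u) :=
  (((measurable_id.indicator measurableSet_Icc).const_mul l).exp).ennreal_ofReal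

variable {l : ℝ}

lemma one_le_truncMGF (hl : 0 ≤ l) (u : ℝ) (μ : Measure ℝ) [IsProbabilityMeasure μ] :
    1 ≤ truncMGF μ l u := by
  calc (1 : ℝ≥0∞) = ∫⁻ _, 1 ∂μ := by rw [lintegral_one, measure_univ]
    _ ≤ truncMGF μ l u := lintegral_mono fun y => ENNReal.one_le_ofReal.2 <|
        one_le_exp (mul_nonneg hl (indicator_nonneg (fun _ hy => hy.1) y))

lemma cappedExp_le_one (hl : 0 ≤ l) (z : ℝ) {y : ℝ} (hy : y ≤ 0) : cappedExp l z y ≤ 1 :=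
  ENNReal.ofReal_le_one.2 <| exp_le_one_iff.2 <|
    mul_nonpos_of_nonneg_of_nonpos hl ((min_le_left _ _).trans hy)

lemma cappedExp_add_le (hl : 0 ≤ l) (u z x y : ℝ) :
    cappedExp l z (x + y) ≤ cappedExp l z x * truncExp l u y +
      (Ioi u).indicator (fun _ => ENNReal.ofReal (exp (l * z))) y := by
  rcases lt_or_ge u y with hu | hu
  · rw [indicator_of_mem (mem_Ioi.2 hu)]
    refine le_add_of_nonneg_of_le zero_le (ENNReal.ofReal_le_ofReal (exp_le_exp.2 ?_))
    gcongr
    exact min_le_right _ _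
  · rw [indicator_of_notMem (notMem_Ioi.2 hu), add_zero, cappedExp, cappedExp, truncExp,
      ← ENNReal.ofReal_mul (exp_nonneg _), ← exp_add, ← mul_add]
    refine ENNReal.ofReal_le_ofReal (exp_le_exp.2 (mul_le_mul_of_nonneg_left ?_ hl))
    have hy : y ≤ (Icc 0 u).indicator id y := by
      rcases lt_or_ge y 0 with hneg | hpos
      · exact hneg.le.trans (indicator_nonneg (fun _ hy => hy.1) y)
      · rw [indicator_of_mem (show y ∈ Icc 0 u from ⟨hpos, hu⟩), id]
    have h0 : 0 ≤ (Icc 0 u).indicator id y := indicator_nonneg (fun _ hy => hy.1) y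
    rw [← min_add_add_right]
    exact min_le_min (by linarith) (by linarith)

lemma mul_measure_inter_lt_le_setLIntegral_cappedExp {Ω : Type*} [MeasurableSpace Ω]
    {P : Measure Ω} {f : Ω → ℝ} (hf : Measurable f) (l z : ℝ) (A : Set Ω) :
    ENNReal.ofReal (exp (l * z)) * P (A ∩ {ω | z < f ω}) ≤ ∫⁻ ω in A, cappedExp l z (f ω) ∂P := by
  rw [inter_comm, ← Measure.restrict_apply (measurableSet_lt measurable_const hf)]
  refine le_trans ?_ (mul_meas_ge_le_lintegral ((measurable_cappedExp l z).comp hf)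
    (ENNReal.ofReal (exp (l * z))))
  gcongr with ω
  intro hω
  rw [Function.comp_apply, cappedExp, min_eq_right hω.le]

end ExponentialMoments

section IncrementBound

variable {Ω : Type*} [MeasurableSpace Ω] {N : ℕ} {P : Measure Ω}
  {μ : Measure ℝ} [IsProbabilityMeasure μ] {ξ : ℕ → Fin N → Fin 2 → Ω → ℝ} {l : ℝ}

lemma IsIIDJumps.setLIntegral_sum_cappedExp_le (hξ : IsIIDJumps P μ ξ) (hl : 0 ≤ l) (u z : ℝ)
    {s : ℕ} {A : Set Ω} (hA : MeasurableSet[brwFilt N ξ s] A) (r : ℕ) :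
    ∫⁻ ω in A, ∑ i, cappedExp l z (lead (fun k i j => ξ k i j ω) s (s + r) i) ∂P ≤
      (2 * truncMGF μ l u) ^ r *
        (N * P A + 2 * N * (ENNReal.ofReal (exp (l * z)) * μ (Ioi u)) * P A) := by
  set V : ℝ → ℝ≥0∞ := (Ioi u).indicator fun _ => ENNReal.ofReal (exp (l * z))
  set a : ℕ → ℝ≥0∞ := fun r =>
    ∫⁻ ω in A, ∑ i, cappedExp l z (lead (fun k i j => ξ k i j ω) s (s + r) i) ∂P
  have hV_int : ∫⁻ y, V y ∂μ = ENNReal.ofReal (exp (l * z)) * μ (Ioi u) :=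
    lintegral_indicator_const measurableSet_Ioi _
  have hstep (r) : a (r + 1) ≤ 2 * truncMGF μ l u * a r + 2 * N * (∫⁻ y, V y ∂μ) * P A :=
    hξ.setLIntegral_sum_lead_succ_le (Nat.le_add_right s r)
      (brwFilt_mono ξ (Nat.le_add_right s r) A hA) (by fun_prop) (by fun_prop)
      (measurable_const.indicator measurableSet_Ioi) (cappedExp_add_le hl u z)
  have hinit : a 0 ≤ N * P A := by
    calc a 0 ≤ ∫⁻ _ in A, N ∂P := lintegral_mono fun ω => by
          refine (Finset.sum_le_card_nsmul Finset.univ _ 1 fun i _ =>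
            cappedExp_le_one hl z (lead_self_nonpos _ s i)).trans_eq ?_
          rw [Finset.card_univ, Fintype.card_fin, nsmul_one]
      _ = N * P A := setLIntegral_const _ _
  have hgrowth : (2 : ℝ≥0∞) ≤ 2 * truncMGF μ l u := le_mul_of_one_le_right' (one_le_truncMGF hl u μ)
  refine le_self_add.trans ((add_le_pow_mul_add_of_succ_le hgrowth hstep r).trans ?_)
  rw [hV_int]
  gcongr

lemma IsIIDJumps.sum_measure_lt_lead_le (hξ : IsIIDJumps P μ ξ) (hl : 0 ≤ l) (u z : ℝ)
    {s : ℕ} {A : Set Ω} (hA : MeasurableSet[brwFilt N ξ s] A) (r : ℕ) :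
    ∑ i, P (A ∩ {ω | z < lead (fun k i j => ξ k i j ω) s (s + r) i}) ≤
      N * (2 * truncMGF μ l u) ^ r *
        (ENNReal.ofReal (exp (-(l * z))) + 2 * μ (Ioi u)) * P A := by
  set E := ENNReal.ofReal (exp (l * z)) with hE
  have hE_inv : E * ENNReal.ofReal (exp (-(l * z))) = 1 := by
    rw [hE, ← ENNReal.ofReal_mul (exp_nonneg _), ← exp_add, add_neg_cancel, exp_zero,
      ENNReal.ofReal_one]
  have hmeas (i) : Measurable fun ω => lead (fun k i j => ξ k i j ω) s (s + r) i :=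
    measurable_lead (Nat.le_add_right s r) (fun k _ => hξ.measurable k) i
  have hE_pos : 0 < E := ENNReal.ofReal_pos.2 (exp_pos _)
  have hE_top : E ≠ ∞ := ENNReal.ofReal_ne_top
  refine (ENNReal.mul_le_mul_iff_right hE_pos.ne' hE_top).1 ?_
  calc E * ∑ i, P (A ∩ {ω | z < lead (fun k i j => ξ k i j ω) s (s + r) i})
      ≤ ∫⁻ ω in A, ∑ i, cappedExp l z (lead (fun k i j => ξ k i j ω) s (s + r) i) ∂P := by
        rw [Finset.mul_sum, lintegral_finsetSum _ fun i _ => by fun_prop]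
        exact Finset.sum_le_sum fun i _ =>
          mul_measure_inter_lt_le_setLIntegral_cappedExp (hmeas i) l z A
    _ ≤ (2 * truncMGF μ l u) ^ r * (N * P A + 2 * N * (E * μ (Ioi u)) * P A) :=
        hξ.setLIntegral_sum_cappedExp_le hl u z hA r
    _ = (2 * truncMGF μ l u) ^ r *
          (N * P A * (E * ENNReal.ofReal (exp (-(l * z)))) + 2 * N * (E * μ (Ioi u)) * P A) := by
        rw [hE_inv, mul_one]
    _ = E * (N * (2 * truncMGF μ l u) ^ r *
          (ENNReal.ofReal (exp (-(l * z))) + 2 * μ (Ioi u)) * P A) := by ring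

lemma IsIIDJumps.measure_inter_lt_theta_increment_le (hξ : IsIIDJumps P μ ξ) (hN : 0 < N)
    (hl : 0 ≤ l) (u : ℝ) {z : ℝ} (hz : 0 ≤ z) {m n : ℕ} {A : Set Ω}
    (hA : MeasurableSet[brwFilt N ξ (n - m)] A) :
    P (A ∩ {ω | z < theta N m (fun k i j => ξ k i j ω) (n + 1) -
        theta N m (fun k i j => ξ k i j ω) n}) ≤
      N * 2 ^ (m + 1) * (truncMGF μ l u ^ m *
        (ENNReal.ofReal (exp (-(l * z))) + 2 * μ (Ioi u))) * μ (Ioi z) * P A := by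
  obtain ⟨r, hr, hrm⟩ : ∃ r, n - m + r = n ∧ r ≤ m := ⟨n - (n - m), by omega, by omega⟩
  set B : Fin N → Set Ω := fun i => A ∩ {ω | z < lead (fun k i j => ξ k i j ω) (n - m) n i}
  have hB (i) : MeasurableSet[brwFilt N ξ n] (B i) :=
    (brwFilt_mono ξ (Nat.sub_le n m) A hA).inter <|
      measurable_lead (Nat.sub_le n m) (fun _ hk => measurable_brwFilt_jump ξ hk) i
        measurableSet_Ioi
  have hcover : A ∩ {ω | z < theta N m (fun k i j => ξ k i j ω) (n + 1) -
        theta N m (fun k i j => ξ k i j ω) n} ⊆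
      ⋃ p : Fin N × Fin 2, B p.1 ∩ {ω | z < ξ n p.1 p.2 ω} := by
    rintro ω ⟨hωA, hω⟩
    obtain ⟨p, hlead, hjump⟩ := exists_lt_lead_and_lt_jump_of_lt_theta_increment hN hz hω
    exact mem_iUnion.2 ⟨p, ⟨hωA, hlead⟩, hjump⟩
  calc _ ≤ ∑ p : Fin N × Fin 2, P (B p.1 ∩ {ω | z < ξ n p.1 p.2 ω}) :=
        (measure_mono hcover).trans (measure_iUnion_fintype_le P _)
    _ = 2 * (∑ i, P (B i)) * μ (Ioi z) := by
        simp only [hξ.measure_inter_lt_jump (hB _), ← Finset.sum_mul, Fintype.sum_prod_type,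
          Finset.sum_const, Finset.card_univ, Fintype.card_fin, nsmul_eq_mul, Nat.cast_ofNat,
          Finset.mul_sum]
    _ ≤ 2 * (N * (2 * truncMGF μ l u) ^ r *
          (ENNReal.ofReal (exp (-(l * z))) + 2 * μ (Ioi u)) * P A) * μ (Ioi z) := by
        gcongr
        simpa only [hr] using hξ.sum_measure_lt_lead_le hl u z hA r
    _ ≤ 2 * (N * (2 * truncMGF μ l u) ^ m *
          (ENNReal.ofReal (exp (-(l * z))) + 2 * μ (Ioi u)) * P A) * μ (Ioi z) := by
        gcongr
        exact (one_le_truncMGF hl u μ).trans (le_mul_of_one_le_left' one_le_two)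
    _ = _ := by ring

end IncrementBound

lemma condExp_indicator_le_of_forall_measure_inter_le {Ω : Type*} {m₀ mΩ : MeasurableSpace Ω}
    {P : Measure Ω} [IsFiniteMeasure P] (hm₀ : m₀ ≤ mΩ) {S : Set Ω} (hS : MeasurableSet S) {C : ℝ}
    (hC : 0 ≤ C) (h : ∀ A, MeasurableSet[m₀] A → P (A ∩ S) ≤ ENNReal.ofReal C * P A) :
    ∀ᵐ ω ∂P, P[S.indicator fun _ => (1 : ℝ) | m₀] ω ≤ C := by
  have hS_int : Integrable (S.indicator fun _ => (1 : ℝ)) P := (integrable_const 1).indicator hS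
  refine ae_le_of_ae_le_trim (hm := hm₀) <| ae_le_of_forall_setIntegral_le
    (integrable_condExp.trim hm₀ stronglyMeasurable_condExp) (integrable_const C) fun A hA _ => ?_
  rw [← setIntegral_trim hm₀ stronglyMeasurable_condExp hA, setIntegral_condExp hm₀ hS_int hA,
    setIntegral_indicator hS, setIntegral_const, setIntegral_const, measureReal_def,
    measureReal_def, trim_measurableSet_eq hm₀ hA, smul_eq_mul, smul_eq_mul, mul_one, mul_comm]
  simpa only [ENNReal.toReal_mul, ENNReal.toReal_ofReal hC] using
    ENNReal.toReal_mono (by finiteness) (h A hA)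

section RegularVariation

/-- The function `1 / T` is regularly varying at `+∞` with index `α`; for a tail `T x = P(X > x)`
this is the assumption on `h = 1 / T`, written without inverses. -/
def HasTailIndex (T : ℝ → ℝ) (α : ℝ) : Prop :=
  ∀ l : ℝ, 0 < l → Tendsto (fun x => T x / T (l * x)) atTop (𝓝 (l ^ α))

variable {T : ℝ → ℝ} {α : ℝ}

lemma HasTailIndex.pos (h : HasTailIndex T α) (hT : Antitone T) (hT0 : ∀ x, 0 ≤ T x) (x : ℝ) :
    0 < T x := by
  have hne : ∀ᶠ y in atTop, T y / T (1 * y) ≠ 0 :=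
    (h 1 one_pos).eventually_ne (by rw [one_rpow]; exact one_ne_zero)
  obtain ⟨y, hy, hxy⟩ := (hne.and (eventually_ge_atTop x)).exists
  exact ((hT0 y).lt_of_ne' (left_ne_zero_of_mul hy)).trans_le (hT hxy)

lemma HasTailIndex.isBigO_comp_div (h : HasTailIndex T α) (hpos : ∀ x, 0 < T x) {K : ℝ}
    (hK : 0 < K) : (fun x => T (x / K)) =O[atTop] T := by
  refine isBigO_of_div_tendsto_nhds (.of_forall fun x hx => absurd hx (hpos x).ne') (K ^ α) ?_
  refine ((h K hK).comp (tendsto_id.atTop_div_const hK)).congr fun x => ?_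
  simp only [Function.comp_apply, id_eq, Pi.div_apply, mul_div_cancel₀ x hK.ne']

lemma exists_eventually_le_of_eventually_two_mul_le {ψ : ℝ → ℝ}
    (hdouble : ∀ᶠ x in atTop, ψ (2 * x) ≤ ψ x)
    (hbdd : ∀ a > 0, ∃ C, ∀ x ∈ Icc a (2 * a), ψ x ≤ C) : ∃ C, ∀ᶠ x in atTop, ψ x ≤ C := by
  obtain ⟨a, hdouble, ha⟩ :=
    ((eventually_forall_ge_atTop.2 hdouble).and (eventually_gt_atTop 0)).exists
  obtain ⟨C, hC⟩ := hbdd a ha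
  have hiter (w : ℝ) (hw : a ≤ w) (k : ℕ) : ψ (2 ^ k * w) ≤ ψ w := by
    induction k with
    | zero => rw [pow_zero, one_mul]
    | succ k ih =>
      rw [pow_succ', mul_assoc]
      have hk : a ≤ 2 ^ k * w :=
        hw.trans (le_mul_of_one_le_left (ha.le.trans hw) (one_le_pow₀ one_le_two))
      exact (hdouble _ hk).trans ih
  refine ⟨C, (eventually_ge_atTop a).mono fun x hx => ?_⟩
  obtain ⟨k, hk, hk'⟩ := exists_nat_pow_near ((one_le_div ha).2 hx) (one_lt_two (α := ℝ))
  have hpow : (0 : ℝ) < 2 ^ k := by positivity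
  have hw : x / 2 ^ k ∈ Icc a (2 * a) := by
    constructor
    · rwa [le_div_iff₀' hpow, ← le_div_iff₀ ha]
    · rw [div_le_iff₀' hpow, ← mul_assoc, ← pow_succ, ← div_le_iff₀ ha]
      exact hk'.le
  calc ψ x = ψ (2 ^ k * (x / 2 ^ k)) := by rw [mul_div_cancel₀ x hpow.ne']
    _ ≤ ψ (x / 2 ^ k) := hiter _ hw.1 k
    _ ≤ C := hC _ hw

lemma HasTailIndex.isBigO_rpow_neg (h : HasTailIndex T α) (hT : Antitone T) (hpos : ∀ x, 0 < T x)
    {g : ℝ} (hg : 0 ≤ g) (hgα : g < α) : T =O[atTop] fun x => x ^ (-g) := by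
  have hratio : ∀ᶠ x in atTop, 2 ^ g < T x / T (2 * x) :=
    (h 2 two_pos).eventually_const_lt (rpow_lt_rpow_of_exponent_lt one_lt_two hgα)
  have hdouble : ∀ᶠ x in atTop, T (2 * x) * (2 * x) ^ g ≤ T x * x ^ g := by
    filter_upwards [hratio, eventually_ge_atTop 0] with x hx hx0
    rw [mul_rpow two_pos.le hx0, ← mul_assoc, mul_comm (T _)]
    exact mul_le_mul_of_nonneg_right ((lt_div_iff₀ (hpos _)).1 hx).le (rpow_nonneg hx0 g)
  have hbdd : ∀ a > 0, ∃ C, ∀ x ∈ Icc a (2 * a), T x * x ^ g ≤ C := fun a ha =>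
    ⟨T a * (2 * a) ^ g, fun x hx =>
      have hx0 : 0 ≤ x := ha.le.trans hx.1
      mul_le_mul (hT hx.1) (rpow_le_rpow hx0 hx.2 hg) (rpow_nonneg hx0 g) (hpos a).le⟩
  obtain ⟨C, hC⟩ := exists_eventually_le_of_eventually_two_mul_le hdouble hbdd
  refine IsBigO.of_bound C ?_
  filter_upwards [hC, eventually_gt_atTop 0] with x hx hx0
  rw [norm_of_nonneg (hpos x).le, norm_of_nonneg (rpow_nonneg hx0.le _), rpow_neg hx0.le,
    ← div_eq_mul_inv, le_div_iff₀ (rpow_pos_of_pos hx0 g)]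
  exact hx

lemma HasTailIndex.rpow_neg_isBigO (h : HasTailIndex T α) (hT : Antitone T) (hpos : ∀ x, 0 < T x)
    {b : ℝ} (hb : 0 ≤ b) (hαb : α < b) : (fun x => x ^ (-b)) =O[atTop] T := by
  have hratio : ∀ᶠ x in atTop, T x / T (2 * x) < 2 ^ b :=
    (h 2 two_pos).eventually_lt_const (rpow_lt_rpow_of_exponent_lt one_lt_two hαb)
  have hdouble : ∀ᶠ x in atTop, (2 * x) ^ (-b) / T (2 * x) ≤ x ^ (-b) / T x := by
    filter_upwards [hratio, eventually_ge_atTop 0] with x hx hx0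
    have hx' := (div_lt_iff₀ (hpos _)).1 hx
    rw [mul_rpow two_pos.le hx0, rpow_neg two_pos.le, div_le_div_iff₀ (hpos _) (hpos _),
      mul_right_comm, mul_comm _ (x ^ (-b))]
    refine mul_le_mul_of_nonneg_left ?_ (rpow_nonneg hx0 _)
    exact (inv_mul_le_iff₀ (rpow_pos_of_pos two_pos b)).2 hx'.le
  have hbdd : ∀ a > 0, ∃ C, ∀ x ∈ Icc a (2 * a), x ^ (-b) / T x ≤ C := fun a ha =>
    ⟨a ^ (-b) / T (2 * a), fun x hx =>
      div_le_div₀ (rpow_nonneg ha.le _) (rpow_le_rpow_of_nonpos ha hx.1 (neg_nonpos.2 hb))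
        (hpos _) (hT hx.2)⟩
  obtain ⟨C, hC⟩ := exists_eventually_le_of_eventually_two_mul_le
    (ψ := fun x => x ^ (-b) / T x) hdouble hbdd
  refine IsBigO.of_bound C ?_
  filter_upwards [hC, eventually_ge_atTop 0] with x hx hx0
  rw [norm_of_nonneg (hpos x).le, norm_of_nonneg (rpow_nonneg hx0 _), ← div_le_iff₀ (hpos x)]
  exact hx

lemma HasTailIndex.exists_eventually_rpow_neg_add_le (h : HasTailIndex T α) (hT : Antitone T)
    (hpos : ∀ x, 0 < T x) {b K : ℝ} (hb : 0 ≤ b) (hαb : α < b) (hK : 0 < K) :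
    ∃ C, ∀ᶠ x in atTop, x ^ (-b) + 2 * T (x / K) ≤ C * T x := by
  obtain ⟨C, hC⟩ := ((h.rpow_neg_isBigO hT hpos hb hαb).add
    ((h.isBigO_comp_div hpos hK).const_mul_left 2)).bound
  refine ⟨C, hC.mono fun x hx => ?_⟩
  rw [norm_of_nonneg (hpos x).le] at hx
  exact (le_norm_self _).trans hx

end RegularVariation

lemma lintegral_posPart_rpow_lt_top {μ : Measure ℝ} [IsFiniteMeasure μ] {g g' : ℝ} (hg : 0 < g)
    (hgg' : g < g') (h : (fun x => μ.real (Ioi x)) =O[atTop] fun x => x ^ (-g')) :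
    ∫⁻ y, ENNReal.ofReal (y⁺ ^ g) ∂μ < ∞ := by
  have hanti : Antitone fun x => μ.real (Ioi x) := fun x y hxy =>
    measureReal_mono (Ioi_subset_Ioi hxy)
  have hbdd : (fun x => μ.real (Ioi x)) =O[𝓝[>] 0] fun x : ℝ => x ^ (-0 : ℝ) :=
    IsBigO.of_bound (μ.real univ) <| .of_forall fun x => by
      rw [neg_zero, rpow_zero, norm_one, mul_one, norm_of_nonneg measureReal_nonneg]
      exact measureReal_mono (subset_univ _)
  have hint := mellin_convergent_of_isBigO_scalar (hanti.locallyIntegrable.locallyIntegrableOn _)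
    h hgg' hbdd hg
  rw [lintegral_rpow_eq_lintegral_meas_lt_mul μ (.of_forall fun y => posPart_nonneg y)
    (by fun_prop) hg]
  refine ENNReal.mul_lt_top ENNReal.ofReal_lt_top ?_
  have hbound := hint.lintegral_lt_top
  refine (setLIntegral_congr_fun measurableSet_Ioi fun t ht => ?_).trans_lt hbound
  have hset : {y : ℝ | t < y⁺} = Ioi t := by
    ext y
    simp only [posPart_def, mem_ofPred_eq, lt_sup_iff, (mem_Ioi.1 ht).not_gt, or_false,
      mem_Ioi]
  rw [hset, ENNReal.ofReal_mul (rpow_nonneg (mem_Ioi.1 ht).le _), mul_comm, ofReal_measureReal]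

-- By convexity, `exp (l * y) ≤ 1 + (y / u) * exp (l * u)` on `[0, u]`, and `y / u ≤ (y / u) ^ g`.
lemma truncExp_le (l : ℝ) {u g : ℝ} (hu : 0 < u) (hg : g ≤ 1) (y : ℝ) :
    truncExp l u y ≤ 1 + ENNReal.ofReal (exp (l * u) * u ^ (-g)) * ENNReal.ofReal (y⁺ ^ g) := by
  by_cases hy : y ∈ Icc 0 u
  · have hy0 : 0 ≤ y := hy.1
    have ht0 : 0 ≤ y / u := div_nonneg hy0 hu.le
    have ht1 : y / u ≤ 1 := (div_le_one hu).2 hy.2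
    have hconvex := convexOn_exp.2 (mem_univ 0) (mem_univ (l * u)) (sub_nonneg.2 ht1) ht0
      (sub_add_cancel 1 (y / u))
    rw [truncExp, indicator_of_mem hy, id, posPart_of_nonneg hy0, ← ENNReal.ofReal_one,
      ← ENNReal.ofReal_mul (by positivity), ← ENNReal.ofReal_add zero_le_one (by positivity)]
    refine ENNReal.ofReal_le_ofReal ?_
    calc exp (l * y) = exp ((1 - y / u) • 0 + (y / u) • (l * u)) := by
          congr 1
          simp only [smul_eq_mul]
          field_simp
          ring
      _ ≤ (1 - y / u) * 1 + (y / u) * exp (l * u) := by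
          simpa only [exp_zero, smul_eq_mul] using hconvex
      _ ≤ 1 + (y / u) ^ g * exp (l * u) := by
          gcongr
          · linarith
          · exact self_le_rpow_of_le_one ht0 ht1 hg
      _ = 1 + exp (l * u) * u ^ (-g) * y ^ g := by
          rw [div_rpow hy0 hu.le, rpow_neg hu.le]
          ring
  · rw [truncExp, indicator_of_notMem hy, mul_zero, exp_zero, ENNReal.ofReal_one]
    exact le_self_add

lemma truncMGF_le (μ : Measure ℝ) [IsProbabilityMeasure μ] (l : ℝ) {u g : ℝ} (hu : 0 < u)
    (hg : g ≤ 1) :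
    truncMGF μ l u ≤
      1 + ENNReal.ofReal (exp (l * u) * u ^ (-g)) * ∫⁻ y, ENNReal.ofReal (y⁺ ^ g) ∂μ := by
  refine (lintegral_mono (truncExp_le l hu hg)).trans_eq ?_
  rw [lintegral_add_left measurable_const, lintegral_one, measure_univ,
    lintegral_const_mul _ (by fun_prop)]

lemma eventually_truncMGF_pow_le {μ : Measure ℝ} [IsProbabilityMeasure μ] {g b K β : ℝ}
    (hg : g ≤ 1) (hmoment : ∫⁻ y, ENNReal.ofReal (y⁺ ^ g) ∂μ < ∞) (hK : 0 < K)
    (hβ : β + b / K < g) :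
    ∀ᶠ z in atTop, ∀ m : ℕ, (m : ℝ) ≤ z ^ β →
      truncMGF μ (b * log z / z) (z / K) ^ m ≤ ENNReal.ofReal (exp 1) := by
  set G := (∫⁻ y, ENNReal.ofReal (y⁺ ^ g) ∂μ).toReal with hG
  have hexponent : Tendsto (fun z : ℝ => K ^ g * G * z ^ (-(g - (β + b / K)))) atTop (𝓝 0) := by
    simpa only [mul_zero] using (tendsto_rpow_neg_atTop (sub_pos.2 hβ)).const_mul (K ^ g * G)
  filter_upwards [hexponent.eventually_le_const one_pos, eventually_gt_atTop 0] with z hz hz0 m hm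
  have hexp : exp (b * log z / z * (z / K)) = z ^ (b / K) := by
    rw [rpow_def_of_pos hz0]
    congr 1
    field_simp
  have hu : (z / K) ^ (-g) = z ^ (-g) * K ^ g := by
    rw [div_rpow hz0.le hK.le, rpow_neg hK.le, div_inv_eq_mul]
  set δ := z ^ (b / K) * (z ^ (-g) * K ^ g) * G
  have hM : truncMGF μ (b * log z / z) (z / K) ≤ ENNReal.ofReal (exp δ) := by
    refine (truncMGF_le μ _ (div_pos hz0 hK) hg).trans ?_
    rw [hexp, hu, ← ENNReal.ofReal_toReal hmoment.ne, ← hG, ← ENNReal.ofReal_mul (by positivity),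
      ← ENNReal.ofReal_one, ← ENNReal.ofReal_add zero_le_one (by positivity), add_comm]
    exact ENNReal.ofReal_le_ofReal (add_one_le_exp δ)
  calc truncMGF μ (b * log z / z) (z / K) ^ m ≤ ENNReal.ofReal (exp δ) ^ m := by gcongr
    _ = ENNReal.ofReal (exp (m * δ)) := by
        rw [← ENNReal.ofReal_pow (exp_nonneg _), ← exp_nat_mul]
    _ ≤ ENNReal.ofReal (exp (z ^ β * δ)) := by gcongr
    _ = ENNReal.ofReal (exp (K ^ g * G * z ^ (-(g - (β + b / K))))) := by
        rw [show -(g - (β + b / K)) = β + b / K + -g by ring, rpow_add hz0, rpow_add hz0]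
        congr 2
        ring
    _ ≤ ENNReal.ofReal (exp 1) := by gcongr

lemma HasTailIndex.eventually_exists_truncMGF_pow_mul_le {μ : Measure ℝ} [IsProbabilityMeasure μ]
    {α β : ℝ} (h : HasTailIndex (fun x => μ.real (Ioi x)) α) (hβ0 : 0 ≤ β) (hβ : β < min 1 α) :
    ∃ C : ℝ, ∀ᶠ z in atTop, ∀ m : ℕ, (m : ℝ) ≤ z ^ β → ∃ l u, 0 ≤ l ∧
      truncMGF μ l u ^ m * (ENNReal.ofReal (exp (-(l * z))) + 2 * μ (Ioi u)) ≤
        ENNReal.ofReal C * μ (Ioi z) := by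
  have hT : Antitone fun x => μ.real (Ioi x) := fun x y hxy =>
    measureReal_mono (Ioi_subset_Ioi hxy)
  have hpos := h.pos hT fun x => measureReal_nonneg
  obtain ⟨g', hβg', hg'⟩ := exists_between hβ
  obtain ⟨g, hβg, hgg'⟩ := exists_between hβg'
  obtain ⟨hg'1, hg'α⟩ := lt_min_iff.1 hg'
  have hg0 : 0 < g := hβ0.trans_lt hβg
  have hmoment := lintegral_posPart_rpow_lt_top hg0 hgg'
    (h.isBigO_rpow_neg hT hpos (hg0.trans hgg').le hg'α)
  have hα : 0 < α := (hg0.trans hgg').trans hg'α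
  set K := 2 * (α + 1) / (g - β)
  have hK : 0 < K := div_pos (by linarith) (sub_pos.2 hβg)
  have hβK : β + (α + 1) / K < g := by
    have : (α + 1) / K = (g - β) / 2 := by simp only [K]; field_simp
    linarith
  obtain ⟨C, hC⟩ :=
    h.exists_eventually_rpow_neg_add_le hT hpos (by linarith) (lt_add_one α) hK
  refine ⟨exp 1 * C, ?_⟩
  filter_upwards [eventually_truncMGF_pow_le (hgg'.trans hg'1).le hmoment hK hβK, hC,
    eventually_ge_atTop 1] with z hM hz hz1 m hm
  have hz0 : 0 < z := one_pos.trans_le hz1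
  refine ⟨(α + 1) * log z / z, z / K,
    div_nonneg (mul_nonneg (by linarith) (log_nonneg hz1)) hz0.le, ?_⟩
  have hexp : exp (-((α + 1) * log z / z * z)) = z ^ (-(α + 1)) := by
    rw [div_mul_cancel₀ _ hz0.ne', rpow_def_of_pos hz0]
    ring_nf
  rw [ENNReal.ofReal_mul (exp_nonneg 1), mul_assoc]
  refine mul_le_mul' (hM m hm) ?_
  rw [hexp, ← ofReal_measureReal, ← ofReal_measureReal, ← ENNReal.ofReal_ofNat,
    ← ENNReal.ofReal_mul zero_le_two, ← ENNReal.ofReal_add (by positivity) (by positivity),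
    ← ENNReal.ofReal_mul' measureReal_nonneg]
  exact ENNReal.ofReal_le_ofReal hz

lemma HasTailIndex.exists_forall_truncMGF_pow_mul_le {μ : Measure ℝ} [IsProbabilityMeasure μ]
    {α D : ℝ} (h : HasTailIndex (fun x => μ.real (Ioi x)) α) (hα : 0 < α) (hD : max 1 α⁻¹ < D) :
    ∃ m₀ : ℕ, ∀ m ≥ m₀, ∀ z, (m : ℝ) ^ D ≤ z → ∃ l u, 0 ≤ l ∧
      truncMGF μ l u ^ m * (ENNReal.ofReal (exp (-(l * z))) + 2 * μ (Ioi u)) ≤ m * μ (Ioi z) := by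
  obtain ⟨hD1, hDα⟩ := max_lt_iff.1 hD
  have hD0 : 0 < D := one_pos.trans hD1
  have hβ : D⁻¹ < min 1 α := lt_min (inv_lt_one_of_one_lt₀ hD1) (inv_lt_of_inv_lt₀ hα hDα)
  obtain ⟨C, hC⟩ := h.eventually_exists_truncMGF_pow_mul_le (inv_nonneg.2 hD0.le) hβ
  have hlarge : ∀ᶠ m : ℕ in atTop, ∀ z, (m : ℝ) ^ D ≤ z → ∀ k : ℕ, (k : ℝ) ≤ z ^ D⁻¹ →
      ∃ l u, 0 ≤ l ∧ truncMGF μ l u ^ k * (ENNReal.ofReal (exp (-(l * z))) + 2 * μ (Ioi u)) ≤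
        ENNReal.ofReal C * μ (Ioi z) :=
    ((tendsto_rpow_atTop hD0).comp tendsto_natCast_atTop_atTop).eventually
      (eventually_forall_ge_atTop.2 hC)
  have hCm : ∀ᶠ m : ℕ in atTop, C ≤ m := tendsto_natCast_atTop_atTop.eventually_ge_atTop C
  obtain ⟨m₀, hm₀⟩ := eventually_atTop.1 (hlarge.and hCm)
  refine ⟨m₀, fun m hm z hz => ?_⟩
  obtain ⟨hm_large, hCm⟩ := hm₀ m hm
  have hmz : (m : ℝ) ≤ z ^ D⁻¹ :=
    (le_rpow_inv_iff_of_pos m.cast_nonneg ((rpow_nonneg m.cast_nonneg D).trans hz) hD0).2 hz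
  obtain ⟨l, u, hl, hlu⟩ := hm_large z hz m hmz
  refine ⟨l, u, hl, hlu.trans ?_⟩
  gcongr
  exact ENNReal.ofReal_le_of_le_toReal (by rwa [ENNReal.toReal_natCast])

section Scale

variable {Ω : Type*} [MeasurableSpace Ω] {P : Measure Ω} {X : Ω → ℝ}

lemma map_real_Ioi_eq_tail (hX : Measurable X) (x : ℝ) :
    (P.map X).real (Ioi x) = tail P X x :=
  map_measureReal_apply hX measurableSet_Ioi

lemma tail_nonneg (x : ℝ) : 0 ≤ tail P X x := ENNReal.toReal_nonneg

lemma tail_antitone [IsFiniteMeasure P] : Antitone (tail P X) := fun _ _ hxy =>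
  measureReal_mono fun _ => hxy.trans_lt

lemma tendsto_tail_atTop [IsProbabilityMeasure P] (hX : Measurable X) :
    Tendsto (tail P X) atTop (𝓝 0) := by
  have := Measure.isProbabilityMeasure_map (μ := P) hX.aemeasurable
  refine Tendsto.congr (fun x => ?_)
    (sub_self (1 : ℝ) ▸ (tendsto_cdf_atTop (P.map X)).const_sub 1)
  rw [cdf_eq_real, ← probReal_compl_eq_one_sub measurableSet_Iic, compl_Iic,
    map_real_Ioi_eq_tail hX]

lemma eventually_hinv_pos [IsProbabilityMeasure P] (hX : Measurable X) {a : ℝ} (ha : 0 < a)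
    (htail : 0 < tail P X a) : ∀ᶠ y in atTop, 0 < hinv P X y := by
  filter_upwards [tendsto_inv_atTop_zero.eventually_lt_const htail, eventually_gt_atTop 0]
    with y hy hy0
  obtain ⟨b, hb0, hb⟩ := ((eventually_ge_atTop 0).and
    ((tendsto_tail_atTop (P := P) hX).eventually_le_const (inv_pos.2 hy0))).exists
  refine ha.trans_le (le_csInf ⟨b, hb0, hb⟩ fun x hx => ?_)
  exact (tail_antitone.reflect_lt (hx.2.trans_lt hy)).le

lemma tendsto_logb_natCast_atTop : Tendsto (fun N : ℕ => logb 2 N) atTop atTop :=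
  (tendsto_logb_atTop one_lt_two).comp tendsto_natCast_atTop_atTop

lemma HasTailIndex.eventually_cN_pos [IsProbabilityMeasure P] {α : ℝ}
    (h : HasTailIndex (tail P X) α) (hX : Measurable X) : ∀ᶠ N : ℕ in atTop, 0 < cN P X N := by
  have htail := h.pos tail_antitone tail_nonneg 1
  have hscale : Tendsto (fun N : ℕ => 2 * (N : ℝ) * logb 2 N) atTop atTop :=
    (tendsto_natCast_atTop_atTop.const_mul_atTop two_pos).atTop_mul_atTop₀
      tendsto_logb_natCast_atTop
  exact hscale.eventually (eventually_hinv_pos hX one_pos htail)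

theorem stmt_1_general [IsProbabilityMeasure P] (hX : Measurable X) {α : ℝ} (hα : 0 < α)
    (hRV : HasTailIndex (tail P X) α) {ε : ℝ} (hε : 0 < ε) :
    ∃ m₀ : ℕ, ∀ m ≥ m₀, ∀ N > 0, ∀ ξ : ℕ → Fin N → Fin 2 → Ω → ℝ, IsIIDJumps P (P.map X) ξ →
      ∀ c > 0, ∀ x : ℝ, (m : ℝ) ^ (max 1 α⁻¹ + ε) / c ≤ x → ∀ n : ℕ,
      ∀ᵐ ω ∂P,
        (P[Set.indicator
            {ω' | x < theta N m (fun k i j => ξ k i j ω' / c) (n + 1) -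
                theta N m (fun k i j => ξ k i j ω' / c) n}
            (fun _ => (1 : ℝ)) | brwFilt N ξ (n - m)]) ω ≤
          (N : ℝ) * m * 2 ^ (m + 1) * (tail P X (c * x)) ^ 2 := by
  have := Measure.isProbabilityMeasure_map (μ := P) hX.aemeasurable
  have hμ : HasTailIndex (fun x => (P.map X).real (Ioi x)) α := by
    simpa only [map_real_Ioi_eq_tail hX] using hRV
  obtain ⟨m₀, hm₀⟩ :=
    hμ.exists_forall_truncMGF_pow_mul_le hα (lt_add_of_pos_right (max 1 α⁻¹) hε)
  refine ⟨m₀, fun m hm N hN ξ hξ c hc x hx n => ?_⟩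
  have hz := (div_le_iff₀' hc).1 hx
  have hz0 : 0 ≤ c * x := (rpow_nonneg m.cast_nonneg _).trans hz
  obtain ⟨l, u, hl, hlu⟩ := hm₀ m hm (c * x) hz
  have hθ (k) : Measurable fun ω => theta N m (fun k i j => ξ k i j ω) k :=
    measurable_theta m fun k _ => hξ.measurable k
  have hS : MeasurableSet {ω | c * x < theta N m (fun k i j => ξ k i j ω) (n + 1) -
      theta N m (fun k i j => ξ k i j ω) n} :=
    measurableSet_lt measurable_const ((hθ (n + 1)).sub (hθ n))
  simp only [theta_div m _ hc.le, ← sub_div, lt_div_iff₀' hc]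
  refine condExp_indicator_le_of_forall_measure_inter_le (brwFilt_le hξ.measurable (n - m)) hS
    (by positivity) fun A hA => ?_
  calc _ ≤ N * 2 ^ (m + 1) * (truncMGF (P.map X) l u ^ m *
          (ENNReal.ofReal (exp (-(l * (c * x)))) + 2 * P.map X (Ioi u))) *
            P.map X (Ioi (c * x)) * P A :=
        hξ.measure_inter_lt_theta_increment_le hN hl u hz0 hA
    _ ≤ N * 2 ^ (m + 1) * (m * P.map X (Ioi (c * x))) * P.map X (Ioi (c * x)) * P A := by gcongr
    _ = ENNReal.ofReal (N * m * 2 ^ (m + 1) * tail P X (c * x) ^ 2) * P A := by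
        rw [← ofReal_measureReal (μ := P.map X), map_real_Ioi_eq_tail hX,
          ENNReal.ofReal_mul (by positivity), ENNReal.ofReal_mul (by positivity),
          ENNReal.ofReal_mul (by positivity), ENNReal.ofReal_natCast, ENNReal.ofReal_natCast,
          ENNReal.ofReal_pow zero_le_two, ENNReal.ofReal_ofNat,
          ENNReal.ofReal_pow (tail_nonneg _)]
        ring

end Scale

/-- Proposition `theta`: for every `ε > 0` there is `N₀` such that for all
`N ≥ N₀`, all integers `m` with `(1/2)log₂ N ≤ m ≤ 2 log₂ N`, all
`x ≥ m^{max(1,1/α)+ε}/c_N` and all `n ≥ 0`, almost surely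
`P(θ^{(m)}_{n+1} − θ^{(m)}_n > x | F_{n−m}) ≤ N m 2^{m+1} / h(c_N x)²`
(note `1/h(c_N x) = P(X > c_N x)`). -/
theorem stmt_1 {Ω : Type*} [MeasurableSpace Ω] (P : Measure Ω) [IsProbabilityMeasure P]
    (X : Ω → ℝ) (hXmeas : Measurable X) (hXpos : ∀ ω, 0 ≤ X ω)
    (α : ℝ) (hα : 0 < α)
    (hRV : ∀ l : ℝ, 0 < l →
      Tendsto (fun x => tail P X x / tail P X (l * x)) atTop (nhds (l ^ α)))
    (ξ : (N : ℕ) → ℕ → Fin N → Fin 2 → Ω → ℝ)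
    (hξmeas : ∀ N n i j, Measurable (ξ N n i j))
    (hξpos : ∀ N n i j ω, 0 ≤ ξ N n i j ω)
    (hξdist : ∀ N n i j, Measure.map (ξ N n i j) P = Measure.map X P)
    (hξindep : ∀ N, iIndepFun
      (fun p : ℕ × Fin N × Fin 2 => ξ N p.1 p.2.1 p.2.2) P)
    (ε : ℝ) (hε : 0 < ε) :
    ∃ N₀ : ℕ, ∀ N : ℕ, N₀ ≤ N → ∀ m : ℕ,
      (1 / 2 : ℝ) * Real.logb 2 N ≤ m → (m : ℝ) ≤ 2 * Real.logb 2 N →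
      ∀ x : ℝ, (m : ℝ) ^ (max 1 α⁻¹ + ε) / cN P X N ≤ x → ∀ n : ℕ,
      ∀ᵐ ω ∂P,
        (P[Set.indicator
            {ω' | x < theta N m (fun k i j => ξ N k i j ω' / cN P X N) (n + 1) -
                theta N m (fun k i j => ξ N k i j ω' / cN P X N) n}
            (fun _ => (1 : ℝ)) | brwFilt N (ξ N) (n - m)]) ω ≤
          (N : ℝ) * m * 2 ^ (m + 1) * (tail P X (cN P X N * x)) ^ 2 := by
  obtain ⟨m₀, hm₀⟩ := stmt_1_general hXmeas hα hRV hε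
  obtain ⟨N₀, hN₀⟩ := eventually_atTop.1 <| (eventually_gt_atTop 0).and <|
    (HasTailIndex.eventually_cN_pos hRV hXmeas).and <|
      tendsto_logb_natCast_atTop.eventually_ge_atTop (2 * m₀)
  refine ⟨N₀, fun N hN m hm _ => ?_⟩
  obtain ⟨hN_pos, hc, hlog⟩ := hN₀ N hN
  have hm₀m : (m₀ : ℝ) ≤ m := by linarith
  exact hm₀ m (Nat.cast_le.1 hm₀m) N hN_pos (ξ N)
    ⟨hξmeas N, hξdist N, hξindep N⟩ (cN P X N) hc

end
end
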